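/- arXiv:2409.13680 — 2 statements merged into one kernel-verified Lean document; each statement's English description precedes it below -/
import Mathlib

section
/- Let G be a finite simple graph with n vertices and e edges, minimum degree δ ≥ 1, maximum degree Δ, and independence number β. Then Inv(G) ≥ (n − β)/Δ + (2β²δ² − e²)/(β·Δ³), with equality if and only if G is a regular balanced bipartite graph. -/
open Finset

/-- The first Zagreb index of a graph: the sum of the squares of the vertex degrees. -/
def zagreb1 {V : Type*} [Fintype V] (G : SimpleGraph V) [DecidableRel G.Adj] : ℝ :=
  ∑ u, (G.degree u : ℝ) ^ 2

/-- The forgotten topological index of a graph: the sum of the cubes of the vertex degrees. -/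
def forgottenIndex {V : Type*} [Fintype V] (G : SimpleGraph V) [DecidableRel G.Adj] : ℝ :=
  ∑ u, (G.degree u : ℝ) ^ 3

/-- The inverse degree of a graph: the sum of the reciprocals of the vertex degrees. -/
noncomputable def invDegree {V : Type*} [Fintype V] (G : SimpleGraph V) [DecidableRel G.Adj] : ℝ :=
  ∑ u, 1 / (G.degree u : ℝ)

/-- The independence number of a graph: the largest cardinality of a set of pairwise
nonadjacent vertices. -/
noncomputable def indepNum {V : Type*} [Fintype V] (G : SimpleGraph V) : ℕ :=
  sSup {k | ∃ s : Finset V, s.card = k ∧ ∀ u ∈ s, ∀ v ∈ s, ¬ G.Adj u v}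

/-- A graph is a regular balanced bipartite graph if its vertices can be partitioned into
two parts of equal size with every edge joining the two parts, and all vertices have the
same degree. -/
def IsRegularBalancedBipartite {V : Type*} [Fintype V] (G : SimpleGraph V) [DecidableRel G.Adj] : Prop :=
  ∃ (A : Finset V) (r : ℕ), 2 * A.card = Fintype.card V ∧
    (∀ u v, G.Adj u v → (u ∈ A ↔ v ∉ A)) ∧ G.IsRegularOfDegree r

/-- A graph is `k`-connected if it has more than `k` vertices and removing any set of
fewer than `k` vertices leaves a connected graph. -/
def IsKConnected {V : Type*} [Fintype V] (G : SimpleGraph V) (k : ℕ) : Prop :=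
  k < Fintype.card V ∧
    ∀ S : Finset V, S.card < k → (G.induce (↑S : Set V)ᶜ).Connected

/-- A graph is traceable if it has a Hamiltonian path. -/
def IsTraceable {V : Type*} [DecidableEq V] (G : SimpleGraph V) : Prop :=
  ∃ (u v : V) (p : G.Walk u v), p.IsHamiltonian

/-!
In an independent set `s` no edge is counted twice by `∑ u ∈ s, d(u)`, so this sum is at most `e`,
with equality exactly when `s` is also a vertex cover, i.e. when `s` and its complement form a
bipartition. A maximum independent set therefore gives `βδ ≤ e`, whence
`2β²δ² - e² ≤ β²δ² ≤ β²Δ²`; dividing by `βΔ³` bounds the right-hand side of the theorem by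
`(n - β)/Δ + β/Δ = n/Δ`, which is at most `Inv(G)` term by term. Equality forces `δ = Δ` and
`e = βδ`, so that a maximum independent set is one side of a balanced bipartition.
-/

section Incidence

variable {V : Type*} {G : SimpleGraph V} [G.LocallyFinite] {s : Finset V}

theorem card_biUnion_incidenceFinset_of_isIndepSet [DecidableEq V] (hs : G.IsIndepSet s) :
    #(s.biUnion fun v => G.incidenceFinset v) = ∑ u ∈ s, G.degree u := by
  have hdisj : (s : Set V).PairwiseDisjoint fun v => G.incidenceFinset v := fun u hu v hv huv =>
    disjoint_left.2 fun e heu hev => hs hu hv huv <|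
      G.adj_of_mem_incidenceSet huv (by simpa using heu) (by simpa using hev)
  simp only [card_biUnion hdisj, SimpleGraph.card_incidenceFinset_eq_degree]

variable [Fintype G.edgeSet]

theorem biUnion_incidenceFinset_subset_edgeFinset [DecidableEq V] :
    (s.biUnion fun v => G.incidenceFinset v) ⊆ G.edgeFinset :=
  biUnion_subset.2 fun v _ => G.incidenceFinset_subset v

theorem biUnion_incidenceFinset_eq_edgeFinset_iff [DecidableEq V] :
    (s.biUnion fun v => G.incidenceFinset v) = G.edgeFinset ↔ G.IsVertexCover s := by
  rw [← biUnion_incidenceFinset_subset_edgeFinset.ge_iff_eq]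
  simp only [subset_iff, Sym2.forall, SimpleGraph.mem_edgeFinset, SimpleGraph.mem_edgeSet,
    mem_biUnion, SimpleGraph.mem_incidenceFinset, SimpleGraph.mk'_mem_incidenceSet_iff,
    SimpleGraph.IsVertexCover, mem_coe]
  grind

theorem sum_degree_le_card_edgeFinset_of_isIndepSet (hs : G.IsIndepSet s) :
    ∑ u ∈ s, G.degree u ≤ #G.edgeFinset := by
  classical
  rw [← card_biUnion_incidenceFinset_of_isIndepSet hs]
  exact card_le_card biUnion_incidenceFinset_subset_edgeFinset

theorem sum_degree_eq_card_edgeFinset_iff_isVertexCover (hs : G.IsIndepSet s) :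
    ∑ u ∈ s, G.degree u = #G.edgeFinset ↔ G.IsVertexCover s := by
  classical
  have hsub := biUnion_incidenceFinset_subset_edgeFinset (G := G) (s := s)
  rw [← card_biUnion_incidenceFinset_of_isIndepSet hs, ← biUnion_incidenceFinset_eq_edgeFinset_iff]
  exact ⟨fun h => eq_of_subset_of_card_le hsub h.ge, congr_arg card⟩

theorem card_mul_eq_card_edgeFinset_iff_isVertexCover {r : ℕ} (hG : G.IsRegularOfDegree r)
    (hs : G.IsIndepSet s) : #s * r = #G.edgeFinset ↔ G.IsVertexCover s := by
  simp only [← sum_degree_eq_card_edgeFinset_iff_isVertexCover hs, hG.degree_eq, sum_const,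
    smul_eq_mul]

end Incidence

theorem isIndepSet_and_isVertexCover_iff {V : Type*} {G : SimpleGraph V} {s : Set V} :
    G.IsIndepSet s ∧ G.IsVertexCover s ↔ ∀ u v, G.Adj u v → (u ∈ s ↔ v ∉ s) := by
  refine ⟨fun ⟨hs, hc⟩ u v huv => ⟨fun hu hv => hs hu hv huv.ne huv, (hc huv).resolve_right⟩,
    fun h => ⟨fun u hu v hv _ huv => (h u v huv).1 hu hv, fun u v huv => ?_⟩⟩
  exact or_iff_not_imp_right.2 (h u v huv).2

theorem indepNum_pos {V : Type*} [Finite V] [Nonempty V] (G : SimpleGraph V) :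
    0 < G.indepNum := by
  obtain ⟨v⟩ := ‹Nonempty V›
  have hv : G.IsIndepSet ({v} : Finset V) := by simp
  exact hv.card_le_indepNum

section FiniteGraph

variable {V : Type*} [Fintype V] (G : SimpleGraph V)

theorem indepNum_eq_simpleGraph_indepNum : indepNum G = G.indepNum := by
  have hindep (s : Finset V) : (∀ u ∈ s, ∀ v ∈ s, ¬ G.Adj u v) ↔ G.IsIndepSet s :=
    ⟨fun h u hu v hv _ => h u hu v hv, fun h u hu v hv huv => h hu hv huv.ne huv⟩
  simp only [indepNum, SimpleGraph.indepNum, SimpleGraph.isNIndepSet_iff, hindep, and_comm]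

variable [DecidableRel G.Adj] {G} {r : ℕ}

theorem nonempty_of_minDegree_pos (hδ : 0 < G.minDegree) : Nonempty V := by
  by_contra hV
  rw [not_nonempty_iff] at hV
  simp at hδ

theorem isRegularOfDegree_minDegree (h : G.minDegree = G.maxDegree) :
    G.IsRegularOfDegree G.minDegree := fun v =>
  (h ▸ G.degree_le_maxDegree v).antisymm (G.minDegree_le_degree v)

theorem two_mul_card_edgeFinset_of_isRegularOfDegree (hG : G.IsRegularOfDegree r) :
    2 * #G.edgeFinset = Fintype.card V * r := by
  simp only [← G.sum_degrees_eq_twice_card_edges, hG.degree_eq, sum_const, smul_eq_mul, card_univ]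

variable (G) in
theorem indepNum_mul_minDegree_le_card_edgeFinset :
    G.indepNum * G.minDegree ≤ #G.edgeFinset := by
  obtain ⟨s, hs⟩ := G.exists_isNIndepSet_indepNum
  calc G.indepNum * G.minDegree = #s • G.minDegree := by rw [hs.card_eq, smul_eq_mul]
    _ ≤ ∑ u ∈ s, G.degree u := card_nsmul_le_sum s _ _ fun u _ => G.minDegree_le_degree u
    _ ≤ #G.edgeFinset := sum_degree_le_card_edgeFinset_of_isIndepSet hs.isIndepSet

theorem IsRegularBalancedBipartite.minDegree_eq_maxDegree [Nonempty V]
    (h : IsRegularBalancedBipartite G) : G.minDegree = G.maxDegree := by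
  obtain ⟨_, r, _, _, hreg⟩ := h
  rw [hreg.minDegree_eq, hreg.maxDegree_eq]

theorem IsRegularBalancedBipartite.card_edgeFinset_eq [Nonempty V]
    (h : IsRegularBalancedBipartite G) : #G.edgeFinset = G.indepNum * G.minDegree := by
  refine le_antisymm ?_ (indepNum_mul_minDegree_le_card_edgeFinset G)
  obtain ⟨A, r, -, hadj, hreg⟩ := h
  obtain ⟨hA, hcover⟩ := isIndepSet_and_isVertexCover_iff.2 hadj
  rw [← (card_mul_eq_card_edgeFinset_iff_isVertexCover hreg hA).2 hcover, hreg.minDegree_eq]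
  exact Nat.mul_le_mul_right r hA.card_le_indepNum

theorem isRegularBalancedBipartite_of_card_edgeFinset_eq (hδ : 0 < G.minDegree)
    (hdeg : G.minDegree = G.maxDegree) (hedge : #G.edgeFinset = G.indepNum * G.minDegree) :
    IsRegularBalancedBipartite G := by
  have hreg := isRegularOfDegree_minDegree hdeg
  obtain ⟨s, hs⟩ := G.exists_isNIndepSet_indepNum
  rw [← hs.card_eq] at hedge
  have hcover := (card_mul_eq_card_edgeFinset_iff_isVertexCover hreg hs.isIndepSet).1 hedge.symm
  have hcard : 2 * #s = Fintype.card V := by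
    refine Nat.eq_of_mul_eq_mul_right hδ ?_
    rw [← two_mul_card_edgeFinset_of_isRegularOfDegree hreg, hedge, mul_assoc]
  exact ⟨s, G.minDegree, hcard,
    isIndepSet_and_isVertexCover_iff.1 ⟨hs.isIndepSet, hcover⟩, hreg⟩

theorem isRegularBalancedBipartite_iff (hδ : 0 < G.minDegree) :
    IsRegularBalancedBipartite G ↔
      G.minDegree = G.maxDegree ∧ #G.edgeFinset = G.indepNum * G.minDegree := by
  have := nonempty_of_minDegree_pos hδ
  exact ⟨fun h => ⟨h.minDegree_eq_maxDegree, h.card_edgeFinset_eq⟩,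
    fun h => isRegularBalancedBipartite_of_card_edgeFinset_eq hδ h.1 h.2⟩

theorem invDegree_eq_card_div_of_isRegularOfDegree (hG : G.IsRegularOfDegree r) :
    invDegree G = Fintype.card V / r := by
  simp only [invDegree, hG.degree_eq, sum_const, card_univ, nsmul_eq_mul, mul_one_div]

theorem card_div_maxDegree_le_invDegree (hδ : 0 < G.minDegree) :
    (Fintype.card V : ℝ) / G.maxDegree ≤ invDegree G := by
  calc (Fintype.card V : ℝ) / G.maxDegree = ∑ _u : V, 1 / (G.maxDegree : ℝ) := by
        rw [sum_const, card_univ, nsmul_eq_mul, mul_one_div]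
    _ ≤ invDegree G := sum_le_sum fun u _ =>
        one_div_le_one_div_of_le (mod_cast hδ.trans_le (G.minDegree_le_degree u))
          (mod_cast G.degree_le_maxDegree u)

end FiniteGraph

section OrderedRing

variable {R : Type*} [CommRing R] [LinearOrder R] [IsStrictOrderedRing R] {x y e : R}

theorem two_mul_sq_sub_sq_le_sq (hx : 0 ≤ x) (hxy : x ≤ y) (hxe : x ≤ e) :
    2 * x ^ 2 - e ^ 2 ≤ y ^ 2 := by
  have hy := pow_le_pow_left₀ hx hxy 2
  have he := pow_le_pow_left₀ hx hxe 2
  linarith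

theorem two_mul_sq_sub_sq_eq_sq_iff (hx : 0 ≤ x) (hxy : x ≤ y) (hxe : x ≤ e) :
    2 * x ^ 2 - e ^ 2 = y ^ 2 ↔ x = y ∧ e = x := by
  refine ⟨fun h => ?_, by rintro ⟨rfl, rfl⟩; ring⟩
  have hy := pow_le_pow_left₀ hx hxy 2
  have he := pow_le_pow_left₀ hx hxe 2
  exact ⟨(sq_eq_sq₀ hx (hx.trans hxy)).1 (by linarith),
    (sq_eq_sq₀ (hx.trans hxe) hx).1 (by linarith)⟩

end OrderedRing

section OrderedField

variable {K : Type*} [Field K] {n b d D e : K}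

theorem sub_div_add_div_eq_div_add (hb : b ≠ 0) (hD : D ≠ 0) :
    (n - b) / D + (2 * b ^ 2 * d ^ 2 - e ^ 2) / (b * D ^ 3) =
      n / D + (2 * (b * d) ^ 2 - e ^ 2 - (b * D) ^ 2) / (b * D ^ 3) := by
  field_simp
  ring

variable [LinearOrder K] [IsStrictOrderedRing K]

theorem sub_div_add_div_le_div (hb : 0 < b) (hD : 0 < D) (hd : 0 ≤ d) (hdD : d ≤ D)
    (he : b * d ≤ e) :
    (n - b) / D + (2 * b ^ 2 * d ^ 2 - e ^ 2) / (b * D ^ 3) ≤ n / D := by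
  rw [sub_div_add_div_eq_div_add hb.ne' hD.ne', add_le_iff_nonpos_right]
  exact div_nonpos_of_nonpos_of_nonneg
    (sub_nonpos.2 (two_mul_sq_sub_sq_le_sq (by positivity) (by gcongr) he)) (by positivity)

theorem sub_div_add_div_eq_div_iff (hb : 0 < b) (hD : 0 < D) (hd : 0 ≤ d) (hdD : d ≤ D)
    (he : b * d ≤ e) :
    (n - b) / D + (2 * b ^ 2 * d ^ 2 - e ^ 2) / (b * D ^ 3) = n / D ↔ d = D ∧ e = b * d := by
  have hden : b * D ^ 3 ≠ 0 := by positivity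
  rw [sub_div_add_div_eq_div_add hb.ne' hD.ne', add_eq_left, div_eq_zero_iff, or_iff_left hden,
    sub_eq_zero, two_mul_sq_sub_sq_eq_sq_iff (by positivity) (by gcongr) he,
    mul_right_inj' hb.ne']

end OrderedField

/-- For a graph `G` with `n` vertices, `e` edges, minimum degree `δ ≥ 1`, maximum degree `Δ`,
and independence number `β`: `Inv(G) ≥ (n − β)/Δ + (2β²δ² − e²)/(βΔ³)`, with equality iff
`G` is a regular balanced bipartite graph. -/
theorem stmt4 {V : Type*} [Fintype V] [DecidableEq V] (G : SimpleGraph V) [DecidableRel G.Adj]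
    (hδ : 1 ≤ G.minDegree) :
    invDegree G ≥ ((Fintype.card V : ℝ) - indepNum G) / (G.maxDegree : ℝ)
        + (2 * (indepNum G : ℝ) ^ 2 * (G.minDegree : ℝ) ^ 2 - (G.edgeFinset.card : ℝ) ^ 2)
          / ((indepNum G : ℝ) * (G.maxDegree : ℝ) ^ 3) ∧
    (invDegree G = ((Fintype.card V : ℝ) - indepNum G) / (G.maxDegree : ℝ)
        + (2 * (indepNum G : ℝ) ^ 2 * (G.minDegree : ℝ) ^ 2 - (G.edgeFinset.card : ℝ) ^ 2)
          / ((indepNum G : ℝ) * (G.maxDegree : ℝ) ^ 3)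
      ↔ IsRegularBalancedBipartite G) := by
  have := nonempty_of_minDegree_pos hδ
  have hβ : (0 : ℝ) < G.indepNum := mod_cast indepNum_pos G
  have hδ' : (0 : ℝ) < G.minDegree := mod_cast hδ
  have hδΔ : (G.minDegree : ℝ) ≤ G.maxDegree := mod_cast G.minDegree_le_maxDegree
  have hΔ := hδ'.trans_le hδΔ
  have he : (G.indepNum : ℝ) * G.minDegree ≤ #G.edgeFinset :=
    mod_cast indepNum_mul_minDegree_le_card_edgeFinset G
  have hInv := card_div_maxDegree_le_invDegree hδ
  have hle := sub_div_add_div_le_div (n := (Fintype.card V : ℝ)) hβ hΔ hδ'.le hδΔ he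
  have heq_iff := sub_div_add_div_eq_div_iff (n := (Fintype.card V : ℝ)) hβ hΔ hδ'.le hδΔ he
  rw [indepNum_eq_simpleGraph_indepNum, isRegularBalancedBipartite_iff hδ]
  refine ⟨hle.trans hInv, fun heq => ?_, fun ⟨hdeg, hedge⟩ => ?_⟩
  · exact_mod_cast heq_iff.1 (hle.antisymm (heq ▸ hInv))
  · rw [heq_iff.2 ⟨mod_cast hdeg, mod_cast hedge⟩, ← hdeg]
    exact invDegree_eq_card_div_of_isRegularOfDegree (isRegularOfDegree_minDegree hdeg)
end

section
/- Let G be a k-connected (k ≥ 2) finite simple graph with n ≥ 3 vertices, e edges, minimum degree δ, and maximum degree Δ. If F(G) ≤ (n − k − 1)·δ³ + (δ/(k + 1))·( 2(k + 1)·((k + 1)·δ² + e²/(n − k − 1)) − e² − 2(k + 1)·(n − k − 1)·Δ² ), then G is Hamiltonian. -/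
open Finset

/-!
By the Chvátal–Erdős theorem, a `k`-connected graph without an independent set of `k + 1` vertices
is Hamiltonian. If `I` is such a set, put `s = k + 1` and `m = n - s`. Every edge has at most one
end in `I`, so `s δ ≤ e ≤ m Δ`, while the assumed bound reads
`F ≤ n δ³ - (δ / s) (e² - (s δ)²) - (2 δ / m) ((m Δ)² - e²)`. As `F ≥ n δ³`, all of these are
equalities: `G` is regular and bipartite with parts `I` and `Iᶜ` of size `s`. Its degree is at least
`k = s - 1`, so `G` is `K_{s,s}` minus at most a perfect matching, which has an explicit
Hamiltonian cycle.
-/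

section CycleList

variable {V : Type*} {G : SimpleGraph V} {l l' : List V} {u v : V}

/-- The vertices of a cycle of `G`, listed in the order in which the cycle visits them. Cutting a
cycle open into a list makes splicing a matter of concatenation and reversal. -/
structure IsCycleList (G : SimpleGraph V) (l : List V) : Prop where
  three_le_length : 3 ≤ l.length
  nodup : l.Nodup
  isChain : l.IsChain G.Adj
  adj_getLast_head : ∀ x ∈ l.getLast?, ∀ y ∈ l.head?, G.Adj x y

namespace IsCycleList

theorem append_comm (h : IsCycleList G (l ++ l')) : IsCycleList G (l' ++ l) := by
  rcases eq_or_ne l [] with rfl | hl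
  · simpa using h
  rcases eq_or_ne l' [] with rfl | hl'
  · simpa using h
  obtain ⟨hchain, hchain', hjoin⟩ := List.isChain_append.1 h.isChain
  have hclose := h.adj_getLast_head
  rw [List.getLast?_append_of_ne_nil _ hl', List.head?_append_of_ne_nil _ hl] at hclose
  refine ⟨?_, List.nodup_append_comm.1 h.nodup, List.isChain_append.2 ⟨hchain', hchain, hclose⟩, ?_⟩
  · simpa [add_comm] using h.three_le_length
  · rwa [List.getLast?_append_of_ne_nil _ hl, List.head?_append_of_ne_nil _ hl']

theorem of_isRotated (h : IsCycleList G l) (hr : l ~r l') : IsCycleList G l' := by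
  obtain ⟨n, hn, rfl⟩ := List.isRotated_iff_mod.1 hr
  rw [List.rotate_eq_drop_append_take hn]
  exact append_comm (by rwa [List.take_append_drop])

theorem isHamiltonian [Fintype V] [DecidableEq V] (h : IsCycleList G l)
    (hcard : l.length = Fintype.card V) : G.IsHamiltonian := by
  intro _
  have hlen := h.three_le_length
  have hne : l ≠ [] := List.ne_nil_of_length_pos (by lia)
  let p := SimpleGraph.Walk.ofSupport l hne h.isChain
  have hp : p.IsPath := SimpleGraph.Walk.isPath_def _ |>.2 <| by
    simpa [p, SimpleGraph.Walk.support_ofSupport] using h.nodup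
  have hplen : p.length = l.length - 1 := SimpleGraph.Walk.length_ofSupport _ _
  have hclose : G.Adj (l.getLast hne) (l.head hne) :=
    h.adj_getLast_head _ (List.getLast_mem_getLast? hne) _ (List.head_mem_head? hne)
  refine ⟨_, .cons hclose p, SimpleGraph.Walk.isHamiltonianCycle_iff_isCycle_and_length_eq.2
    ⟨SimpleGraph.Walk.isCycle_iff_isPath_tail_and_le_length.2 ⟨by simpa using hp, ?_⟩, ?_⟩⟩ <;>
  · rw [SimpleGraph.Walk.length_cons]
    lia

end IsCycleList

theorem isCycleList_support_tail {w : G.Walk v v} (hw : w.IsCycle) :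
    IsCycleList G w.support.tail := by
  cases w with
  | nil => exact absurd hw SimpleGraph.Walk.not_isCycle_nil
  | cons hadj p =>
    refine ⟨by simpa using hw.three_le_length, hw.support_nodup, p.isChain_adj_support, ?_⟩
    simpa [List.getLast?_eq_some_getLast p.support_ne_nil, List.head?_eq_some_head p.support_ne_nil]

theorem isCycleList_append_support (hlen : 2 ≤ l.length) (hnodup : l.Nodup)
    (hchain : l.IsChain G.Adj) {p : G.Walk u v} (hp : p.IsPath) (hdisj : l.Disjoint p.support)
    (hu : ∀ x ∈ l.getLast?, G.Adj x u) (hv : ∀ y ∈ l.head?, G.Adj v y) :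
    IsCycleList G (l ++ p.support) where
  three_le_length := by
    rw [List.length_append, p.length_support]
    lia
  nodup := hnodup.append hp.support_nodup hdisj
  isChain := List.isChain_append.2 ⟨hchain, p.isChain_adj_support, by
    simpa [List.head?_eq_some_head p.support_ne_nil] using hu⟩
  adj_getLast_head := by
    rw [List.getLast?_append_of_ne_nil _ p.support_ne_nil,
      List.head?_append_of_ne_nil _ (List.ne_nil_of_length_pos (by lia))]
    simpa [List.getLast?_eq_some_getLast p.support_ne_nil] using hv

end CycleList

section Rotation

variable {α : Type*} [DecidableEq α] {l : List α} {x y : α}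

theorem formPerm_apply_of_mem_getLast? (hx : x ∈ l.getLast?) (hy : y ∈ l.head?) :
    l.formPerm x = y := by
  cases l with
  | nil => simp at hx
  | cons a t =>
    obtain rfl : a = y := by simpa using hy
    rw [List.getLast?_eq_some_getLast (List.cons_ne_nil _ _), Option.mem_some_iff] at hx
    rw [← hx, List.formPerm_apply_getLast]

theorem exists_isRotated_mem_getLast? (hl : l.Nodup) (hx : x ∈ l) :
    ∃ t, l ~r t ∧ l.formPerm x ∈ t.head? ∧ x ∈ t.getLast? := by
  obtain ⟨s, t, rfl⟩ := List.append_of_mem hx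
  have hr : s ++ x :: t ~r t ++ (s ++ [x]) := by
    rw [List.append_cons]
    exact List.isRotated_append
  have hlast : x ∈ (t ++ (s ++ [x])).getLast? := by simp [← List.append_assoc]
  obtain ⟨y, hy⟩ : ∃ y, y ∈ (t ++ (s ++ [x])).head? := ⟨_, List.head_mem_head? (by simp)⟩
  refine ⟨_, hr, ?_, hlast⟩
  rwa [List.formPerm_eq_of_isRotated hl hr, formPerm_apply_of_mem_getLast? hlast hy]

theorem exists_isRotated_append (hl : l.Nodup) (hx : x ∈ l) (hy : y ∈ l) (hxy : x ≠ y) :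
    ∃ s t, l ~r s ++ t ∧ l.formPerm x ∈ s.head? ∧ y ∈ s.getLast? ∧
      l.formPerm y ∈ t.head? ∧ x ∈ t.getLast? := by
  obtain ⟨t, hr, hhead, hlast⟩ := exists_isRotated_mem_getLast? hl hx
  obtain ⟨a, b, rfl⟩ := List.append_of_mem (hr.mem_iff.1 hy)
  have hb : b ≠ [] := by
    rintro rfl
    simp [hxy.symm] at hlast
  obtain ⟨z, hz⟩ : ∃ z, z ∈ b.head? := ⟨_, List.head_mem_head? hb⟩
  rw [List.append_cons] at hr hhead hlast
  have hr' : l ~r b ++ (a ++ [y]) := hr.trans List.isRotated_append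
  refine ⟨a ++ [y], b, hr, ?_, by simp, ?_, ?_⟩
  · rwa [List.head?_append_of_ne_nil _ (by simp)] at hhead
  · rwa [List.formPerm_eq_of_isRotated hl hr', formPerm_apply_of_mem_getLast? (y := z) (by simp)
      (by rwa [List.head?_append_of_ne_nil _ hb])]
  · rwa [List.getLast?_append_of_ne_nil _ hb] at hlast

end Rotation

section Separation

variable {V : Type*} {G : SimpleGraph V}

theorem exists_isPath_of_mem_componentCompl {K : Set V} {C : G.ComponentCompl K} {u v : V}
    (hu : u ∈ C) (hv : v ∈ C) : ∃ p : G.Walk u v, p.IsPath ∧ ∀ x ∈ p.support, x ∉ K := by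
  obtain ⟨huK, rfl⟩ := hu
  obtain ⟨hvK, huv⟩ := hv
  obtain ⟨p, hp⟩ := (SimpleGraph.ConnectedComponent.exact huv.symm).exists_isPath
  let f : G.induce Kᶜ ↪g G := SimpleGraph.Embedding.induce Kᶜ
  refine ⟨p.map f.toHom, hp.map f.injective, fun x hx ↦ ?_⟩
  obtain ⟨z, -, rfl⟩ := List.mem_map.1 (SimpleGraph.Walk.support_map f.toHom p ▸ hx)
  exact z.2

variable [Fintype V] {k : ℕ}

namespace IsKConnected

theorem le_card_of_separates (hG : IsKConnected G k) {A : Set V} {S : Finset V} {a b : V}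
    (haA : a ∈ A) (haS : a ∉ S) (hbA : b ∉ A) (hbS : b ∉ S)
    (hsep : ∀ u ∈ A, ∀ v ∉ A, G.Adj u v → v ∈ S) : k ≤ #S := by
  by_contra! hlt
  obtain ⟨p⟩ := (hG.2 S hlt).preconnected ⟨a, haS⟩ ⟨b, hbS⟩
  obtain ⟨d, -, hfst, hsnd⟩ := p.exists_boundary_dart (Subtype.val ⁻¹' A) haA hbA
  exact d.snd.2 (hsep _ hfst _ hsnd d.adj)

theorem le_degree [DecidableRel G.Adj] (hG : IsKConnected G k) (v : V) : k ≤ G.degree v := by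
  classical
  by_contra! hlt
  obtain ⟨z, -, hz⟩ := exists_mem_notMem_of_card_lt_card (s := insert v (G.neighborFinset v))
    (t := univ) ((card_insert_le _ _).trans_lt (by
      rw [G.card_neighborFinset_eq_degree, card_univ]
      have := hG.1
      lia))
  rw [mem_insert, not_or] at hz
  refine hlt.not_ge (hG.le_card_of_separates (A := {v}) rfl (by simp) hz.1 hz.2 ?_)
  rintro u rfl w - huw
  simpa using huw

theorem connected (hG : IsKConnected G k) (hk : 0 < k) : G.Connected := by
  have h := hG.2 ∅ hk
  rw [coe_empty, Set.compl_empty] at h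
  exact G.induceUnivIso.connected_iff.1 h

end IsKConnected

theorem exists_isCycleList_of_connected [Nontrivial V] [DecidableRel G.Adj] (hG : G.Connected)
    (hdeg : ∀ v, G.degree v ≠ 1) : ∃ l, IsCycleList G l := by
  have hcyc : ¬ G.IsAcyclic := fun hac ↦
    have ⟨v, hv⟩ := SimpleGraph.IsTree.exists_vert_degree_one_of_nontrivial (G := G) ⟨hG, hac⟩
    hdeg v hv
  simp only [SimpleGraph.IsAcyclic, not_forall, not_not] at hcyc
  obtain ⟨v, w, hw⟩ := hcyc
  exact ⟨_, isCycleList_support_tail hw⟩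

end Separation

section LongestCycle

variable {V : Type*} {G : SimpleGraph V} {l : List V} {u v x y : V}
  {C : G.ComponentCompl {x | x ∈ l}}

theorem exists_maximalFor_isCycleList [Finite V] (h : ∃ l, IsCycleList G l) :
    ∃ l, MaximalFor (IsCycleList G) List.length l := by
  have := Fintype.ofFinite V
  exact Set.Finite.exists_maximalFor List.length {l | IsCycleList G l}
    ((List.finite_length_le V (Fintype.card V)).subset fun _ hl ↦ hl.nodup.length_le_card) h

theorem not_adj_head_of_adj_getLast (hl : MaximalFor (IsCycleList G) List.length l)
    {t : List V} (hperm : t.Perm l) (hchain : t.IsChain G.Adj) (hx : x ∈ t.getLast?)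
    (hy : y ∈ t.head?) (hu : u ∈ C) (hv : v ∈ C) (hxu : G.Adj x u) : ¬ G.Adj y v := by
  intro hyv
  obtain ⟨p, hp, hpl⟩ := exists_isPath_of_mem_componentCompl hu hv
  have hcyc : IsCycleList G (t ++ p.support) :=
    isCycleList_append_support
      (hperm.length_eq ▸ (Nat.le_succ 2).trans hl.prop.three_le_length)
      (hperm.nodup_iff.2 hl.prop.nodup) hchain hp
      (fun z hz hzp ↦ hpl z hzp (hperm.mem_iff.1 hz))
      (fun z hz ↦ Option.mem_unique hx hz ▸ hxu)
      (fun z hz ↦ Option.mem_unique hy hz ▸ hyv.symm)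
  have hlen : (t ++ p.support).length = l.length + (p.length + 1) := by
    rw [List.length_append, hperm.length_eq, p.length_support]
  have hle := hl.le_of_le hcyc (by lia)
  lia

variable [DecidableEq V]

theorem not_adj_formPerm_of_adj (hl : MaximalFor (IsCycleList G) List.length l) (hx : x ∈ l)
    (hu : u ∈ C) (hxu : G.Adj x u) (hv : v ∈ C) : ¬ G.Adj (l.formPerm x) v := by
  obtain ⟨t, hr, hhead, hlast⟩ := exists_isRotated_mem_getLast? hl.prop.nodup hx
  exact not_adj_head_of_adj_getLast hl hr.perm.symm (hl.prop.of_isRotated hr).isChain hlast hhead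
    hu hv hxu

theorem not_adj_formPerm_formPerm (hl : MaximalFor (IsCycleList G) List.length l) (hx : x ∈ l)
    (hy : y ∈ l) (hxy : x ≠ y) (hu : u ∈ C) (hxu : G.Adj x u) (hv : v ∈ C) (hyv : G.Adj y v) :
    ¬ G.Adj (l.formPerm x) (l.formPerm y) := by
  intro hadj
  obtain ⟨s, t, hr, hshead, hslast, hthead, htlast⟩ :=
    exists_isRotated_append hl.prop.nodup hx hy hxy
  -- The list `t.reverse ++ s` runs from `x` to `y`, jumping once between the two successors.
  obtain ⟨hs, ht, -⟩ := List.isChain_append.1 (hl.prop.of_isRotated hr).isChain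
  have hperm : (t.reverse ++ s).Perm l :=
    (List.perm_append_comm.trans (t.reverse_perm.append_left s)).trans hr.perm.symm
  have hchain : (t.reverse ++ s).IsChain G.Adj :=
    List.isChain_append.2 ⟨List.isChain_reverse.2 (ht.imp fun _ _ h ↦ h.symm), hs,
      fun a ha b hb ↦ by
        rw [List.getLast?_reverse] at ha
        rw [← Option.mem_unique hthead ha, ← Option.mem_unique hshead hb]
        exact hadj.symm⟩
  refine not_adj_head_of_adj_getLast hl hperm hchain (x := y) (y := x) ?_ ?_ hv hu hyv hxu
  · rwa [List.getLast?_append_of_ne_nil _ (by rintro rfl; simp at hslast)]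
  · rwa [List.head?_append_of_ne_nil _ (by rintro h; simp_all), List.head?_reverse]

open Classical in
/-- The vertices of the list `l` with a neighbour in `C`. When `l` is a longest cycle and `C` a
component of its complement, they separate `C` from the rest of `l`. -/
noncomputable def attachments (G : SimpleGraph V) (l : List V) (C : Set V) : Finset V :=
  {x ∈ l.toFinset | ∃ u ∈ C, G.Adj x u}

theorem mem_attachments {C : Set V} :
    x ∈ attachments G l C ↔ x ∈ l ∧ ∃ u ∈ C, G.Adj x u := by
  simp [attachments]

theorem isIndepSet_insert_image_formPerm (hl : MaximalFor (IsCycleList G) List.length l)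
    (hv : v ∈ C) :
    G.IsIndepSet (insert v (l.formPerm '' (attachments G l C : Set V))) := by
  have : Std.Symm fun a b ↦ ¬ G.Adj a b := ⟨fun _ _ h h' ↦ h h'.symm⟩
  refine Set.pairwise_insert_of_symm.2 ⟨?_, ?_⟩
  · rintro _ ⟨x, hx, rfl⟩ _ ⟨y, hy, rfl⟩ hne
    obtain ⟨hxl, u, hu, hxu⟩ := mem_attachments.1 hx
    obtain ⟨hyl, w, hw, hyw⟩ := mem_attachments.1 hy
    exact not_adj_formPerm_formPerm hl hxl hyl (ne_of_apply_ne _ hne) hu hxu hw hyw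
  · rintro _ ⟨x, hx, rfl⟩ - hadj
    obtain ⟨hxl, u, hu, hxu⟩ := mem_attachments.1 hx
    exact not_adj_formPerm_of_adj hl hxl hu hxu hv hadj.symm

theorem isNIndepSet_insert_image_formPerm (hl : MaximalFor (IsCycleList G) List.length l)
    (hv : v ∈ C) :
    G.IsNIndepSet (#(attachments G l C) + 1)
      (insert v ((attachments G l C).image l.formPerm)) where
  isIndepSet := by simpa using isIndepSet_insert_image_formPerm hl hv
  card_eq := by
    rw [card_insert_of_notMem, card_image_of_injective _ l.formPerm.injective]
    intro hmem
    obtain ⟨x, hx, rfl⟩ := mem_image.1 hmem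
    exact C.notMem_of_mem hv (List.formPerm_mem_iff_mem.2 (mem_attachments.1 hx).1)

theorem exists_mem_notMem_attachments (hl : MaximalFor (IsCycleList G) List.length l) :
    ∃ y ∈ l, y ∉ attachments G l C := by
  obtain ⟨x, hx⟩ := List.exists_mem_of_length_pos
    (Nat.zero_lt_of_lt hl.prop.three_le_length)
  by_contra! h
  obtain ⟨-, u, hu, hxu⟩ := mem_attachments.1 (h x hx)
  obtain ⟨-, v, hv, hyv⟩ := mem_attachments.1 (h _ (List.formPerm_mem_iff_mem.2 hx))
  exact not_adj_formPerm_of_adj hl hx hu hxu hv hyv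

theorem IsKConnected.le_card_attachments [Fintype V] {k : ℕ} (hG : IsKConnected G k)
    (hl : MaximalFor (IsCycleList G) List.length l) : k ≤ #(attachments G l C) := by
  obtain ⟨a, ha⟩ := C.nonempty
  obtain ⟨b, hbl, hb⟩ := exists_mem_notMem_attachments (C := C) hl
  refine hG.le_card_of_separates ha (fun h ↦ C.notMem_of_mem ha (mem_attachments.1 h).1)
    (fun h ↦ C.notMem_of_mem h hbl) hb fun u hu v hv huv ↦ mem_attachments.2 ⟨?_, u, hu, huv.symm⟩
  by_contra hvl
  exact hv (C.mem_of_adj u v hu hvl huv)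

/-- The **Chvátal–Erdős theorem**. -/
theorem IsKConnected.isHamiltonian_of_indepSetFree [Fintype V] {k : ℕ} (hG : IsKConnected G k)
    (hk : 2 ≤ k) (hfree : G.IndepSetFree (k + 1)) : G.IsHamiltonian := by
  classical
  have : Nontrivial V := Fintype.one_lt_card_iff_nontrivial.1 (by have := hG.1; lia)
  obtain ⟨l, hl⟩ := exists_maximalFor_isCycleList <|
    exists_isCycleList_of_connected (hG.connected (by lia)) fun v ↦ by
      have := hG.le_degree v
      lia
  refine hl.prop.isHamiltonian <| hl.prop.nodup.length_le_card.antisymm <| not_lt.1 fun hlt ↦ ?_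
  obtain ⟨v, -, hv⟩ := exists_mem_notMem_of_card_lt_card (s := l.toFinset) (t := univ)
    (l.toFinset_card_le.trans_lt hlt)
  have hvl : v ∉ {x | x ∈ l} := by simpa using hv
  have hle := Nat.succ_le_succ (hG.le_card_attachments (C := G.componentComplMk hvl) hl)
  exact G.cliqueFree_compl.1 ((G.cliqueFree_compl.2 hfree).mono hle) _
    (isNIndepSet_insert_image_formPerm hl (G.componentComplMk_mem hvl))

end LongestCycle

section Crown

variable {V : Type*} {G : SimpleGraph V}

theorem isCycleList_zigzag {s : ℕ} (hs : 2 ≤ s) {a b : ZMod s → V} (ha : Function.Injective a)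
    (hb : Function.Injective b) (hne : ∀ i j, a i ≠ b j) (hab : ∀ i, G.Adj (a i) (b i))
    (hba : ∀ i, G.Adj (b i) (a (i + 1))) :
    IsCycleList G ((List.range s).flatMap fun i : ℕ ↦ [a i, b i]) where
  three_le_length := by
    rw [List.length_flatMap]
    simp only [List.length_cons, List.length_nil, List.map_const', List.length_range,
      List.sum_replicate, smul_eq_mul]
    lia
  nodup := by
    refine List.nodup_flatMap.2 ⟨fun i _ ↦ by simpa using hne i i,
      List.nodup_range.pairwise_of_forall_ne fun i hi j hj hij ↦ ?_⟩
    have hcast : (i : ZMod s) ≠ j := fun h ↦ hij <|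
      ((ZMod.natCast_eq_natCast_iff _ _ _).1 h).eq_of_lt_of_lt (List.mem_range.1 hi)
        (List.mem_range.1 hj)
    simp [Function.onFun, ha.eq_iff, hb.eq_iff, hne, (hne _ _).symm, hcast.symm]
  isChain := by
    rw [List.flatMap_def, List.isChain_flatten (by simp), List.isChain_map, List.isChain_range]
    simpa using ⟨fun i _ ↦ hab i, fun i _ ↦ hba i⟩
  adj_getLast_head := by
    obtain ⟨t, rfl⟩ := Nat.exists_eq_add_of_le' (by lia : 1 ≤ s)
    have hclose : (t : ZMod (t + 1)) + 1 = 0 := mod_cast ZMod.natCast_self (t + 1)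
    intro x hx y hy
    rw [List.range_succ] at hx
    rw [List.range_succ_eq_map] at hy
    obtain rfl : b t = x := by simpa using hx
    obtain rfl : a 0 = y := by simpa using hy
    exact hclose ▸ hba t

theorem isHamiltonian_of_crown [Fintype V] [DecidableEq V] {ι : Type*} [Fintype ι]
    (hι : 3 ≤ Fintype.card ι) (f : ι ⊕ ι ≃ V)
    (hadj : ∀ i j, i ≠ j → G.Adj (f (.inl i)) (f (.inr j))) : G.IsHamiltonian := by
  have : NeZero (Fintype.card ι) := ⟨by lia⟩
  have : Fact (1 < Fintype.card ι) := ⟨by lia⟩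
  let e : ZMod (Fintype.card ι) ≃ ι := Fintype.equivOfCardEq (ZMod.card _)
  have htwo : (2 : ZMod (Fintype.card ι)) ≠ 0 := fun h ↦
    absurd (Nat.le_of_dvd two_pos ((ZMod.natCast_eq_zero_iff 2 _).1 (mod_cast h))) (by lia)
  have hcyc := isCycleList_zigzag (G := G) (by lia)
    (a := fun i ↦ f (.inl (e i))) (b := fun i ↦ f (.inr (e (i + 2))))
    (f.injective.comp (Sum.inl_injective.comp e.injective))
    (f.injective.comp (Sum.inr_injective.comp (e.injective.comp (add_left_injective 2))))
    (fun i j ↦ f.injective.ne Sum.inl_ne_inr)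
    (fun i ↦ hadj _ _ (e.injective.ne (by simpa using htwo)))
    (fun i ↦ (hadj _ _ (e.injective.ne (by simp [← one_add_one_eq_two]))).symm)
  refine hcyc.isHamiltonian ?_
  simp [← Fintype.card_congr f, mul_two]

end Crown

section AlmostCompleteBipartite

theorem exists_equiv_of_biUnique {α β : Type*} [Fintype α] [Fintype β]
    (hcard : Fintype.card α = Fintype.card β) {r : α → β → Prop} (hr : Relator.BiUnique r) :
    ∃ e : α ≃ β, ∀ a b, r a b → e a = b := by
  classical
  let f (a : α) : β := if h : ∃ b, r a b then h.choose else Fintype.equivOfCardEq hcard a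
  have hf {a b} (hab : r a b) : f a = b := by
    have h : ∃ b, r a b := ⟨b, hab⟩
    exact (dif_pos h).trans (hr.2 h.choose_spec hab)
  obtain ⟨e, he⟩ := Finset.exists_equiv_extend_of_card_eq (t := (univ : Finset β))
    (s := {a | ∃ b, r a b}) (f := f) hcard (subset_univ _) (by
      intro a ha a' ha' haa'
      obtain ⟨b, hb⟩ := (mem_filter.1 ha).2
      obtain ⟨b', hb'⟩ := (mem_filter.1 ha').2
      rw [hf hb, hf hb'] at haa'
      exact hr.1 hb (haa' ▸ hb'))
  refine ⟨e.trans (Equiv.subtypeUnivEquiv mem_univ), fun a b hab ↦ ?_⟩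
  exact (he a (by simpa using ⟨b, hab⟩)).trans (hf hab)

variable {V : Type*} [Fintype V] {G : SimpleGraph V} [DecidableRel G.Adj]

theorem eq_of_not_adj_of_isBipartiteWith {A B : Finset V} {v x y : V}
    (h : G.IsBipartiteWith A B) (hv : v ∈ A) (hdeg : #B ≤ G.degree v + 1) (hx : x ∈ B) (hy : y ∈ B)
    (hvx : ¬ G.Adj v x) (hvy : ¬ G.Adj v y) : x = y := by
  classical
  have hle : #(B \ G.neighborFinset v) ≤ 1 := by
    rw [card_sdiff_of_subset (SimpleGraph.isBipartiteWith_neighborFinset_subset h hv),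
      G.card_neighborFinset_eq_degree]
    lia
  exact card_le_one.1 hle x (by simp [hx, hvx]) y (by simp [hy, hvy])

theorem isHamiltonian_of_isBipartiteWith_of_card_le_degree_add_one [DecidableEq V]
    {A : Finset V} (h : G.IsBipartiteWith A (Aᶜ : Finset V)) (hA : 3 ≤ #A) (hcard : #Aᶜ = #A)
    (hdeg : ∀ v, #A ≤ G.degree v + 1) : G.IsHamiltonian := by
  have hunique : Relator.BiUnique fun (a : A) (b : {v // v ∉ A}) ↦ ¬ G.Adj a b := by
    refine ⟨fun a a' b ha ha' ↦ Subtype.ext ?_, fun a b b' hb hb' ↦ Subtype.ext ?_⟩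
    · exact eq_of_not_adj_of_isBipartiteWith h.symm (mem_compl.2 b.2) (hdeg b) a.2 a'.2
        (fun hba ↦ ha hba.symm) (fun hba ↦ ha' hba.symm)
    · exact eq_of_not_adj_of_isBipartiteWith h a.2 (hcard ▸ hdeg a) (mem_compl.2 b.2)
        (mem_compl.2 b'.2) hb hb'
  obtain ⟨e, he⟩ := exists_equiv_of_biUnique (by
    simpa [Fintype.card_subtype_compl, card_compl] using hcard.symm) hunique
  refine isHamiltonian_of_crown (by simpa using hA)
    ((Equiv.sumCongr (Equiv.refl A) e).trans (Equiv.sumCompl (· ∈ A))) fun a a' haa' ↦ ?_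
  by_contra hadj
  exact haa' (e.injective (he a (e a') hadj))

end AlmostCompleteBipartite

section DegreeSums

variable {V : Type*} [Fintype V] {G : SimpleGraph V} [DecidableRel G.Adj]
  {I : Finset V}

theorem card_biUnion_incidenceFinset [DecidableEq V] (hI : G.IsIndepSet I) :
    #(I.biUnion fun v ↦ G.incidenceFinset v) = ∑ v ∈ I, G.degree v := by
  simp_rw [← G.card_incidenceFinset_eq_degree]
  refine card_biUnion fun u hu v hv huv ↦ ?_
  rw [Function.onFun, ← disjoint_coe, Set.disjoint_iff_inter_eq_empty, G.coe_incidenceFinset,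
    G.coe_incidenceFinset]
  exact G.incidenceSet_inter_incidenceSet_of_not_adj (hI hu hv huv) huv

theorem biUnion_incidenceFinset_subset [DecidableEq V] :
    (I.biUnion fun v ↦ G.incidenceFinset v) ⊆ G.edgeFinset :=
  biUnion_subset.2 fun v _ ↦ G.incidenceFinset_subset v

theorem sum_degree_le_card_edgeFinset (hI : G.IsIndepSet I) :
    ∑ v ∈ I, G.degree v ≤ #G.edgeFinset := by
  classical
  exact card_biUnion_incidenceFinset hI ▸ card_le_card biUnion_incidenceFinset_subset

theorem isBipartiteWith_compl_of_card_edgeFinset_le [DecidableEq V] (hI : G.IsIndepSet I)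
    (hle : #G.edgeFinset ≤ ∑ v ∈ I, G.degree v) : G.IsBipartiteWith I (Iᶜ : Finset V) where
  disjoint := disjoint_coe.2 disjoint_compl_right
  mem_of_adj u v huv := by
    have hcover := eq_of_subset_of_card_le biUnion_incidenceFinset_subset
      (hle.trans_eq (card_biUnion_incidenceFinset hI).symm)
    obtain ⟨w, hw, he⟩ := mem_biUnion.1 (hcover ▸ G.mem_edgeFinset.2 huv : s(u, v) ∈ _)
    have hnot : ¬ (u ∈ I ∧ v ∈ I) := fun ⟨hu, hv⟩ ↦ hI hu hv huv.ne huv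
    rcases (G.mem_incidenceFinset _ _).1 he with ⟨-, he⟩
    rcases Sym2.mem_iff.1 he with rfl | rfl <;> simp_all

theorem card_mul_minDegree_le_card_edgeFinset (hI : G.IsIndepSet I) :
    #I * G.minDegree ≤ #G.edgeFinset :=
  (card_nsmul_le_sum _ _ _ fun v _ ↦ G.minDegree_le_degree v).trans
    (sum_degree_le_card_edgeFinset hI)

theorem card_edgeFinset_le_card_compl_mul_maxDegree [DecidableEq V] (hI : G.IsIndepSet I) :
    #G.edgeFinset ≤ #Iᶜ * G.maxDegree := by
  have hsum : ∑ v ∈ I, G.degree v + ∑ v ∈ Iᶜ, G.degree v = 2 * #G.edgeFinset := by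
    rw [sum_add_sum_compl, G.sum_degrees_eq_twice_card_edges]
  have hle := sum_degree_le_card_edgeFinset hI
  calc #G.edgeFinset ≤ ∑ v ∈ Iᶜ, G.degree v := by lia
    _ ≤ #Iᶜ * G.maxDegree := sum_le_card_nsmul _ _ _ fun v _ ↦ G.degree_le_maxDegree v

end DegreeSums

theorem eq_of_le_forgotten_bound {F s m e δ Δ : ℝ} (hs : 0 < s) (hm : 0 < m) (hδ : 0 < δ)
    (hF : (s + m) * δ ^ 3 ≤ F) (hes : s * δ ≤ e) (hem : e ≤ m * Δ)
    (h : F ≤ m * δ ^ 3 + δ / s *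
      (2 * s * (s * δ ^ 2 + e ^ 2 / m) - e ^ 2 - 2 * s * m * Δ ^ 2)) :
    s * δ = e ∧ e = m * Δ ∧ F = (s + m) * δ ^ 3 := by
  have hsδ : 0 < s * δ := mul_pos hs hδ
  have he : 0 < e := hsδ.trans_le hes
  have hbound : m * δ ^ 3 + δ / s *
      (2 * s * (s * δ ^ 2 + e ^ 2 / m) - e ^ 2 - 2 * s * m * Δ ^ 2) =
      (s + m) * δ ^ 3 - δ / s * (e ^ 2 - (s * δ) ^ 2) - 2 * δ / m * ((m * Δ) ^ 2 - e ^ 2) := by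
    field_simp
    ring
  have hlow : 0 ≤ e ^ 2 - (s * δ) ^ 2 := sub_nonneg.2 (pow_le_pow_left₀ hsδ.le hes 2)
  have hhigh : 0 ≤ (m * Δ) ^ 2 - e ^ 2 := sub_nonneg.2 (pow_le_pow_left₀ he.le hem 2)
  have hlow' : 0 ≤ δ / s * (e ^ 2 - (s * δ) ^ 2) := by positivity
  have hhigh' : 0 ≤ 2 * δ / m * ((m * Δ) ^ 2 - e ^ 2) := by positivity
  rw [hbound] at h
  have hlow0 : δ / s * (e ^ 2 - (s * δ) ^ 2) = 0 := by linarith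
  have hhigh0 : 2 * δ / m * ((m * Δ) ^ 2 - e ^ 2) = 0 := by linarith
  refine ⟨?_, ?_, by linarith⟩
  · have := (mul_eq_zero.1 hlow0).resolve_left (by positivity)
    exact ((pow_left_inj₀ he.le hsδ.le two_ne_zero).1 (sub_eq_zero.1 this)).symm
  · have := (mul_eq_zero.1 hhigh0).resolve_left (by positivity)
    exact ((pow_left_inj₀ (he.le.trans hem) he.le two_ne_zero).1 (sub_eq_zero.1 this)).symm

section ForgottenIndex

variable {V : Type*} [Fintype V] {G : SimpleGraph V} [DecidableRel G.Adj]

theorem minDegree_pow_le_degree_pow (v : V) (n : ℕ) :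
    (G.minDegree : ℝ) ^ n ≤ (G.degree v : ℝ) ^ n := by
  gcongr
  exact G.minDegree_le_degree v

theorem card_mul_minDegree_pow_le_forgottenIndex :
    (Fintype.card V : ℝ) * (G.minDegree : ℝ) ^ 3 ≤ forgottenIndex G := by
  rw [← nsmul_eq_mul, ← card_univ]
  exact card_nsmul_le_sum _ _ _ fun v _ ↦ minDegree_pow_le_degree_pow v 3

theorem isRegularOfDegree_minDegree_of_forgottenIndex_eq
    (h : forgottenIndex G = (Fintype.card V : ℝ) * (G.minDegree : ℝ) ^ 3) :
    G.IsRegularOfDegree G.minDegree := by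
  intro v
  have hsum : ∑ _v : V, (G.minDegree : ℝ) ^ 3 = ∑ v, (G.degree v : ℝ) ^ 3 := by
    rw [sum_const, card_univ, nsmul_eq_mul, ← h, forgottenIndex]
  have hv := (sum_eq_sum_iff_of_le fun u _ ↦ minDegree_pow_le_degree_pow u 3).1 hsum v (mem_univ v)
  exact (pow_left_inj₀ (Nat.zero_le _) (Nat.zero_le _) three_ne_zero).1 (mod_cast hv.symm)

theorem isBipartiteWith_compl_of_forgottenIndex_le [DecidableEq V] {I : Finset V}
    (hI : G.IsIndepSet I) (hne : I.Nonempty) (hδ : 0 < G.minDegree)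
    (h : forgottenIndex G ≤ (#Iᶜ : ℝ) * (G.minDegree : ℝ) ^ 3 + (G.minDegree : ℝ) / (#I : ℝ) *
      (2 * (#I : ℝ) * ((#I : ℝ) * (G.minDegree : ℝ) ^ 2 + (#G.edgeFinset : ℝ) ^ 2 / (#Iᶜ : ℝ))
        - (#G.edgeFinset : ℝ) ^ 2 - 2 * (#I : ℝ) * (#Iᶜ : ℝ) * (G.maxDegree : ℝ) ^ 2)) :
    G.IsBipartiteWith I (Iᶜ : Finset V) ∧ #Iᶜ = #I := by
  have : Nonempty V := hne.to_type
  have hlow := card_mul_minDegree_le_card_edgeFinset hI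
  have hhigh := card_edgeFinset_le_card_compl_mul_maxDegree hI
  have hs : 0 < #I := hne.card_pos
  have hm : 0 < #Iᶜ :=
    Nat.pos_of_mul_pos_right ((Nat.mul_pos hs hδ).trans_le (hlow.trans hhigh))
  have hcard : (#I : ℝ) + #Iᶜ = Fintype.card V := mod_cast card_add_card_compl I
  obtain ⟨hlowR, hhighR, hF⟩ := eq_of_le_forgotten_bound (mod_cast hs) (mod_cast hm) (mod_cast hδ)
    (hcard ▸ card_mul_minDegree_pow_le_forgottenIndex) (mod_cast hlow) (mod_cast hhigh) h
  have hreg := isRegularOfDegree_minDegree_of_forgottenIndex_eq (hcard ▸ hF)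
  have hlow_eq : #I * G.minDegree = #G.edgeFinset := mod_cast hlowR
  have hhigh_eq : #G.edgeFinset = #Iᶜ * G.maxDegree := mod_cast hhighR
  have hmax : G.maxDegree = G.minDegree := hreg.maxDegree_eq
  refine ⟨isBipartiteWith_compl_of_card_edgeFinset_le hI ?_, ?_⟩
  · rw [sum_congr rfl fun v _ ↦ hreg v, sum_const, smul_eq_mul, hlow_eq]
  · exact Nat.eq_of_mul_eq_mul_right hδ (by rw [hlow_eq, hhigh_eq, hmax])

end ForgottenIndex

/-- If `G` is a `k`-connected (`k ≥ 2`) graph with `n ≥ 3` vertices, `e` edges, minimum degree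
`δ`, and maximum degree `Δ`, and
`F(G) ≤ (n − k − 1)δ³ + (δ/(k+1))(2(k+1)((k+1)δ² + e²/(n − k − 1)) − e² − 2(k+1)(n − k − 1)Δ²)`,
then `G` is Hamiltonian. -/
theorem stmt8 {V : Type*} [Fintype V] [DecidableEq V] (G : SimpleGraph V) [DecidableRel G.Adj]
    (k : ℕ) (hk : 2 ≤ k) (hconn : IsKConnected G k) (hn : 3 ≤ Fintype.card V)
    (h : forgottenIndex G ≤ ((Fintype.card V : ℝ) - k - 1) * (G.minDegree : ℝ) ^ 3
        + ((G.minDegree : ℝ) / ((k : ℝ) + 1)) *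
          (2 * ((k : ℝ) + 1) * (((k : ℝ) + 1) * (G.minDegree : ℝ) ^ 2
              + (G.edgeFinset.card : ℝ) ^ 2 / ((Fintype.card V : ℝ) - k - 1))
            - (G.edgeFinset.card : ℝ) ^ 2
            - 2 * ((k : ℝ) + 1) * ((Fintype.card V : ℝ) - k - 1) * (G.maxDegree : ℝ) ^ 2)) :
    G.IsHamiltonian := by
  by_cases hfree : G.IndepSetFree (k + 1)
  · exact hconn.isHamiltonian_of_indepSetFree hk hfree
  obtain ⟨I, hI, hcard⟩ : ∃ I, G.IsNIndepSet (k + 1) I := by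
    simpa [SimpleGraph.IndepSetFree] using hfree
  have : Nonempty V := Fintype.card_pos_iff.1 (by lia)
  have hδ : k ≤ G.minDegree := G.le_minDegree_of_forall_le_degree k hconn.le_degree
  have hcard_compl : (Fintype.card V : ℝ) - k - 1 = #Iᶜ := by
    rw [card_compl, Nat.cast_sub I.card_le_univ, hcard, Nat.cast_succ]
    ring
  have hcardR : (k : ℝ) + 1 = #I := by rw [hcard, Nat.cast_succ]
  rw [hcard_compl, hcardR] at h
  obtain ⟨hbip, hbal⟩ :=
    isBipartiteWith_compl_of_forgottenIndex_le hI (card_pos.1 (by lia)) (by lia) h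
  exact isHamiltonian_of_isBipartiteWith_of_card_le_degree_add_one hbip (by lia) hbal fun v ↦ by
    have := hconn.le_degree v
    lia
end
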